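/- arXiv:math/0402330 — 2 statements merged into one kernel-verified Lean document; each statement's English description precedes it below -/
import Mathlib

section
/- Let θ be an automorphism of M_N(W), W the first Weyl algebra over an algebraically closed field k of characteristic zero, such that θ(p) = p. Then θ(q) = q - B(p) where B = h(p)·Id_N - Q^{-1}·Q' for some polynomial h ∈ k[p] and some matrix Q ∈ M_N(k[p]) invertible in M_N(k[p]), where Q' = ∂_p(Q); moreover the restriction of θ to M_N(k[p]) is conjugation by Q. -/
open Polynomial

set_option synthInstance.maxHeartbeats 1000000
set_option maxHeartbeats 1000000

noncomputable section

variable (k : Type*) [Field k] [CharZero k]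

/-- The operator `p`: multiplication by `X` on `k[X]`. -/
def pOp : Module.End k (Polynomial k) := LinearMap.mulLeft k (X : Polynomial k)

/-- The operator `q = d/dX` on `k[X]`. -/
def qOp : Module.End k (Polynomial k) := derivative

/-- The (first) Weyl algebra, realized concretely as the subalgebra of
`End_k(k[X])` generated by multiplication by `X` and `d/dX`.  (In characteristic
zero this is a faithful model of `k⟨p,q | qp - pq = 1⟩`.) -/
def WeylA : Subalgebra k (Module.End k (Polynomial k)) :=
  Algebra.adjoin k {pOp k, qOp k}

/-- The element `p` of the Weyl algebra. -/
def pW : WeylA k := ⟨pOp k, Algebra.subset_adjoin (Set.mem_insert _ _)⟩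

/-- The element `q` of the Weyl algebra. -/
def qW : WeylA k := ⟨qOp k, Algebra.subset_adjoin (Set.mem_insert_of_mem _ rfl)⟩

variable (N : ℕ)

/-- `M_N(W)`, the `N×N` matrices over the Weyl algebra. -/
abbrev MW := Matrix (Fin N) (Fin N) (WeylA k)

/-- The scalar matrix `p·Id_N`. -/
def pM : MW k N := Matrix.diagonal fun _ => pW k

/-- The scalar matrix `q·Id_N`. -/
def qM : MW k N := Matrix.diagonal fun _ => qW k

/-- The derivation `∂_q(a) = [a,p]` on `M_N(W)`. -/
def dq (a : MW k N) : MW k N := a * pM k N - pM k N * a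

/-- Evaluation of a polynomial at `p`, i.e. the embedding `k[p] → W`. -/
def polyP : Polynomial k →ₐ[k] WeylA k := Polynomial.aeval (pW k)

/-- Evaluation of a polynomial at `q`, i.e. the embedding `k[q] → W`. -/
def polyQ : Polynomial k →ₐ[k] WeylA k := Polynomial.aeval (qW k)



theorem ring_aux {S : Type*} [Ring S] (c q a d : S) (h1 : c * a = a * c + d)
    (h2 : q * a = a * q + d) : (c - q) * a = a * (c - q) := by
  rw [sub_mul, mul_sub, h1, h2]
  abel

theorem sn_aux {R : Type*} [CommRing R] [IsDomain R] [IsPrincipalIdealRing R] {N : ℕ} (hN : 0 < N)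
    (φ : Matrix (Fin N) (Fin N) R →ₐ[R] Matrix (Fin N) (Fin N) R) :
    ∃ P Pinv : Matrix (Fin N) (Fin N) R, P * Pinv = 1 ∧ Pinv * P = 1 ∧
      ∀ A, φ A = P * A * Pinv := by
  classical
  let z : Fin N := ⟨0, hN⟩
  let e : Fin N → Fin N → Matrix (Fin N) (Fin N) R := fun i j => φ (Matrix.single i j 1)
  have he : ∀ i j l, e i j * e j l = e i l := by
    intro i j l
    simp only [e, ← map_mul]
    simp
  have he0 : ∀ i j j' l, j ≠ j' → e i j * e j' l = 0 := by
    intro i j j' l h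
    simp only [e, ← map_mul]
    simp [h]
  have hsum : ∑ i, e i i = 1 := by
    simp only [e, ← map_sum]
    rw [← map_one φ]
    congr 1
    ext a b
    rw [Matrix.sum_apply]
    by_cases h : a = b
    · subst h
      rw [Finset.sum_eq_single a]
      · simp
      · intro c _ hc
        simp [Matrix.single_apply, hc]
      · simp
    · rw [Finset.sum_eq_zero, Matrix.one_apply_ne h]
      intro c _
      rw [Matrix.single_apply, if_neg]
      grind
  let L : Submodule R (Fin N → R) := LinearMap.range (Matrix.toLin' (e z z))
  have hL : ∀ x ∈ L, (e z z).mulVec x = x := by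
    rintro x ⟨y, rfl⟩
    simp [Matrix.toLin'_apply, he]
  have hmem : ∀ i y, (e z i).mulVec y ∈ L := fun i y =>
    ⟨(e z i).mulVec y, by simp [Matrix.toLin'_apply, he]⟩
  let F : (Fin N → L) →ₗ[R] (Fin N → R) :=
    ∑ i, (Matrix.toLin' (e i z)) ∘ₗ L.subtype ∘ₗ LinearMap.proj i
  have hF : ∀ l, F l = ∑ i, (e i z).mulVec (l i : Fin N → R) := by
    intro l
    simp [F, Matrix.toLin'_apply]
  have hdec : ∀ y : Fin N → R, ∑ i, (e i z).mulVec ((e z i).mulVec y) = y := by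
    intro y
    simp only [Matrix.mulVec_mulVec, he]
    rw [← Matrix.sum_mulVec, hsum, Matrix.one_mulVec]
  have hbij : Function.Bijective F := by
    constructor
    · rw [← LinearMap.ker_eq_bot, LinearMap.ker_eq_bot']
      intro l hl
      rw [hF] at hl
      funext j
      have h2 := congrArg (fun y => (e z j).mulVec y) hl
      simp only [Matrix.mulVec_sum, Matrix.mulVec_mulVec, Matrix.mulVec_zero] at h2
      rw [Finset.sum_eq_single j] at h2
      · rw [he, hL _ (l j).2] at h2
        exact Subtype.ext h2
      · intro b _ hb
        rw [he0 _ _ _ _ hb.symm, Matrix.zero_mulVec]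
      · simp
    · intro y
      exact ⟨fun i => ⟨_, hmem i y⟩, by rw [hF]; exact hdec y⟩
  have hrank : Module.finrank R L = 1 := by
    have h1 := (LinearEquiv.ofBijective F hbij).finrank_eq
    rw [Module.finrank_pi_fintype] at h1
    rw [Finset.sum_const, Finset.card_univ, Fintype.card_fin, Module.finrank_fintype_fun_eq_card,
      Fintype.card_fin, smul_eq_mul] at h1
    exact Nat.eq_of_mul_eq_mul_left hN (by rw [h1, mul_one])
  obtain ⟨⟨v, hvL⟩, hv⟩ : ∃ v : L, ∀ w : L, ∃ c : R, c • v = w := by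
    let b := Module.finBasisOfFinrankEq R L hrank
    refine ⟨b 0, fun w => ⟨b.repr w 0, ?_⟩⟩
    conv_rhs => rw [← b.sum_repr w]
    simp
  let P : Matrix (Fin N) (Fin N) R := Matrix.of fun a i => ((e i z).mulVec v) a
  have hP : ∀ x, P.mulVec x = ∑ i, x i • (e i z).mulVec v := by
    intro x
    ext a
    simp [P, Matrix.mulVec, dotProduct, mul_comm]
  have hsurj : Function.Surjective P.mulVec := by
    intro y
    choose c hc using fun i => hv ⟨_, hmem i y⟩
    refine ⟨c, ?_⟩
    rw [hP]
    conv_rhs => rw [← hdec y]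
    refine Finset.sum_congr rfl fun i _ => ?_
    rw [← Matrix.mulVec_smul]
    congr 1
    exact congrArg Subtype.val (hc i)
  obtain ⟨Pinv, hPi⟩ := Matrix.mulVec_surjective_iff_exists_right_inverse.mp hsurj
  refine ⟨P, Pinv, hPi, mul_eq_one_comm.mp hPi, fun A => ?_⟩
  have key : φ A * P = P * A := by
    have h1 : ∀ i j, e i j * P = P * Matrix.single i j 1 := by
      intro i j
      apply Matrix.ext_of_mulVec_single
      intro l
      rw [← Matrix.mulVec_mulVec, ← Matrix.mulVec_mulVec, hP, hP, Matrix.mulVec_sum]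
      simp only [Matrix.mulVec_smul, Matrix.mulVec_mulVec]
      rw [Finset.sum_eq_single l, Finset.sum_eq_single i]
      · by_cases h : j = l
        · subst h
          simp [he]
        · simp [he0 _ _ _ _ h, h]
      · intro b _ hb
        simp [Matrix.single_apply, hb.symm]
      · simp
      · intro b _ hb
        simp [hb]
      · simp
    induction A using Matrix.induction_on' with
    | h_zero => simp
    | h_add p q hp hq => simp [add_mul, mul_add, hp, hq]
    | h_std_basis i j x =>
      have : Matrix.single i j x = x • Matrix.single i j (1 : R) := by simp
      rw [this, map_smul, Matrix.smul_mul, Matrix.mul_smul]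
      exact congrArg _ (h1 i j)
  rw [← key, mul_assoc, hPi, mul_one]

section
variable {k}

theorem polyP_apply (f g : Polynomial k) : ((polyP k f : WeylA k) : Module.End k (Polynomial k)) g = f * g := by
  have h : (WeylA k).val.comp (polyP k) = (Algebra.lmul k (Polynomial k)) := by
    apply Polynomial.algHom_ext
    simp [polyP, pW, pOp]
    rfl
  exact congrArg (fun t : Module.End k (Polynomial k) => t g) (DFunLike.congr_fun h f)

theorem polyP_inj : Function.Injective (polyP k) := by
  intro f g h
  have := polyP_apply f 1
  rw [h, polyP_apply] at this
  simpa using this.symm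

theorem weyl_comm (a : WeylA k) (h : a * pW k = pW k * a) :
    a = polyP k ((a : Module.End k (Polynomial k)) 1) := by
  have h1 : ∀ f, (a : Module.End k (Polynomial k)) (X * f) = X * (a : Module.End k (Polynomial k)) f :=
    fun f => congrArg (fun t : WeylA k => (t : Module.End k (Polynomial k)) f) h
  apply Subtype.ext
  apply LinearMap.ext
  intro f
  rw [polyP_apply]
  induction f using Polynomial.induction_on' with
  | add p q hp hq => rw [map_add, hp, hq, mul_add]
  | monomial n c =>
    have : ∀ n : ℕ, (a : Module.End k (Polynomial k)) (X ^ n) = (a : Module.End k (Polynomial k)) 1 * X ^ n := by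
      intro n
      induction n with
      | zero => simp
      | succ n ih => rw [pow_succ', h1, ih]; ring
    rw [← Polynomial.C_mul_X_pow_eq_monomial, ← Polynomial.smul_eq_C_mul, map_smul, this, mul_smul_comm]

theorem qW_comm (f : Polynomial k) :
    qW k * polyP k f = polyP k f * qW k + polyP k (derivative f) := by
  apply Subtype.ext
  apply LinearMap.ext
  intro g
  change derivative (((polyP k f : WeylA k) : Module.End k (Polynomial k)) g) =
    ((polyP k f : WeylA k) : Module.End k (Polynomial k)) (derivative g) +
    ((polyP k (derivative f) : WeylA k) : Module.End k (Polynomial k)) g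
  simp only [polyP_apply, derivative_mul]
  ring

end

/-- The embedding of polynomial matrices. -/
def iotaM : Matrix (Fin N) (Fin N) (Polynomial k) →ₐ[k] MW k N := (polyP k).mapMatrix

section
variable {k} {N}

theorem iotaM_apply (A : Matrix (Fin N) (Fin N) (Polynomial k)) : iotaM k N A = A.map (polyP k) := rfl

theorem iotaM_inj : Function.Injective (iotaM k N) := Matrix.map_injective polyP_inj

theorem iotaM_of_comm (a : MW k N) (h : a * pM k N = pM k N * a) :
    ∃ A, iotaM k N A = a := by
  refine ⟨Matrix.of fun i j => ((a i j : WeylA k) : Module.End k (Polynomial k)) 1, ?_⟩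
  ext1 i j
  have := congrFun (congrFun h i) j
  simp only [pM, Matrix.mul_diagonal, Matrix.diagonal_mul] at this
  exact (weyl_comm _ this).symm

theorem iotaM_scalar_X : iotaM k N (algebraMap (Polynomial k) _ X) = pM k N := by
  ext1 i j
  by_cases h : i = j
  · subst h; simp [iotaM_apply, pM, polyP, Matrix.algebraMap_matrix_apply]
  · simp [iotaM_apply, pM, h, Matrix.algebraMap_matrix_apply]

theorem iotaM_comm_p (A : Matrix (Fin N) (Fin N) (Polynomial k)) :
    iotaM k N A * pM k N = pM k N * iotaM k N A := by
  rw [← iotaM_scalar_X, ← map_mul, ← map_mul, Algebra.commutes]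

theorem qM_comm (A : Matrix (Fin N) (Fin N) (Polynomial k)) :
    qM k N * iotaM k N A = iotaM k N A * qM k N + iotaM k N (A.map derivative) := by
  ext1 i j
  simp only [qM, Matrix.mul_diagonal, Matrix.diagonal_mul, Matrix.add_apply]
  exact qW_comm (A i j)

end

/-- Lemma 3.3.4(ii): an automorphism `θ` of `M_N(W)` with `θ(p) = p` restricts
to conjugation by an invertible `Q ∈ M_N(k[p])` on `M_N(k[p])` and satisfies
`θ(q) = q - B(p)` with `B = h(p)·Id - Q⁻¹·Q'`. -/
theorem automorphism_fixing_p_on_weyl [IsAlgClosed k] (N : ℕ) (hN : 0 < N)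
    (θ : MW k N ≃ₐ[k] MW k N)
    (hp : θ (pM k N) = pM k N) :
    ∃ (h : Polynomial k) (Q Qinv : Matrix (Fin N) (Fin N) (Polynomial k)),
      Q * Qinv = 1 ∧ Qinv * Q = 1 ∧
      θ (qM k N) = qM k N -
        ((h • (1 : Matrix (Fin N) (Fin N) (Polynomial k))
          - Qinv * Q.map (derivative : Polynomial k → Polynomial k))).map (polyP k) ∧
      (∀ B : Matrix (Fin N) (Fin N) (Polynomial k),
        θ (B.map (polyP k)) = (Qinv * B * Q).map (polyP k)) := by
  let ι := iotaM k N
  have hι : Function.Injective ι := iotaM_inj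
  have hex : ∀ A, ∃ B, ι B = θ (ι A) := by
    intro A
    apply iotaM_of_comm
    rw [← hp, ← map_mul, ← map_mul]
    exact congrArg θ (iotaM_comm_p A)
  choose f hf using hex
  have hscal : ∀ r : Polynomial k,
      θ (ι (algebraMap (Polynomial k) _ r)) = ι (algebraMap (Polynomial k) _ r) := by
    intro r
    have h : (θ.toAlgHom.comp ι).comp (IsScalarTower.toAlgHom k (Polynomial k)
        (Matrix (Fin N) (Fin N) (Polynomial k))) = ι.comp (IsScalarTower.toAlgHom k (Polynomial k)
        (Matrix (Fin N) (Fin N) (Polynomial k))) := by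
      apply Polynomial.algHom_ext
      change θ (iotaM k N (algebraMap (Polynomial k) _ X)) = iotaM k N (algebraMap (Polynomial k) _ X)
      rw [iotaM_scalar_X, hp]
    exact DFunLike.congr_fun h r
  let φ : Matrix (Fin N) (Fin N) (Polynomial k) →ₐ[Polynomial k]
      Matrix (Fin N) (Fin N) (Polynomial k) :=
    { toFun := f
      map_one' := hι (by rw [hf, map_one, map_one])
      map_mul' := fun a b => hι (by rw [hf, map_mul, map_mul, map_mul, hf, hf])
      map_zero' := hι (by rw [hf, map_zero, map_zero])
      map_add' := fun a b => hι (by rw [hf, map_add, map_add, map_add, hf, hf])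
      commutes' := fun r => hι (by rw [hf, hscal]) }
  obtain ⟨P, Pinv, h1, h2, h3⟩ := sn_aux hN φ
  have hθ : ∀ A, θ (ι A) = ι P * ι A * ι Pinv := by
    intro A
    rw [← hf, ← map_mul, ← map_mul, ← h3]
    rfl
  have i1 : ι P * ι Pinv = 1 := by rw [← map_mul, h1, map_one]
  have i2 : ι Pinv * ι P = 1 := by rw [← map_mul, h2, map_one]
  obtain ⟨c, hc⟩ : ∃ c, c = ι Pinv * θ (qM k N) * ι P := ⟨_, rfl⟩
  have hθq : θ (qM k N) = ι P * c * ι Pinv := by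
    rw [hc]
    calc θ (qM k N) = (ι P * ι Pinv) * θ (qM k N) * (ι P * ι Pinv) := by rw [i1, one_mul, mul_one]
      _ = _ := by simp only [mul_assoc]
  have hcA : ∀ A, c * ι A = ι A * c + ι (A.map derivative) := by
    intro A
    have h := congrArg θ (qM_comm A)
    change θ (qM k N * ι A) = θ (ι A * qM k N + ι (A.map derivative)) at h
    rw [map_mul, map_add, map_mul, hθ, hθ, hθq] at h
    have h' := congrArg (fun t => ι Pinv * t * ι P) h
    simp only [mul_add, add_mul] at h'
    have r1 : ∀ x, ι Pinv * (ι P * x) = x := fun x => by rw [← mul_assoc, i2, one_mul]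
    simpa only [mul_assoc, r1, i2, mul_one] using h'
  have hd : ∀ A, (c - qM k N) * ι A = ι A * (c - qM k N) := by
    intro A
    exact ring_aux c (qM k N) (ι A) (ι (A.map derivative)) (hcA A) (qM_comm A)
  obtain ⟨C, hC⟩ := iotaM_of_comm (c - qM k N) (by rw [← iotaM_scalar_X]; exact hd _)
  change ι C = _ at hC
  have hCc : ∀ A, C * A = A * C := by
    intro A
    apply hι
    rw [map_mul, map_mul, hC, hd]
  obtain ⟨g, hg⟩ := Matrix.mem_range_scalar_of_commute_single (M := C)
    (fun i j _ => (hCc _).symm)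
  have hg' : C = g • (1 : Matrix (Fin N) (Fin N) (Polynomial k)) := by
    rw [← hg]; ext1 i j; simp [Matrix.one_apply, Matrix.diagonal_apply]
  refine ⟨-g, Pinv, P, h2, h1, ?_, ?_⟩
  · have hc' : c = qM k N + ι C := by rw [hC]; abel
    change _ = qM k N - ι _
    have hq := qM_comm Pinv
    change qM k N * ι Pinv = ι Pinv * qM k N + ι (Pinv.map derivative) at hq
    have e1 : ι P * ι C * ι Pinv = ι C := by
      rw [← map_mul, ← map_mul, ← hCc, mul_assoc, h1, mul_one]
    rw [hθq, hc', mul_add, add_mul, e1, mul_assoc, hq, mul_add, ← mul_assoc, i1, one_mul, hg',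
      map_sub, map_mul, neg_smul, map_neg]
    abel
  · intro B
    change θ (ι B) = ι _
    rw [hθ, map_mul, map_mul]

end
end

section
/- Let C ⊆ Cend_N be a conformal subalgebra, where Cend_N = H ⊗ M_N(k[v]) with products a ∘_n b = A(v)·∂_v^n(B(v)). Suppose Cend_{N,Q} := k[v]·C admits the direct sum decomposition Cend_{N,Q} = C ⊕ v·C ⊕ v^2·C ⊕ ... ⊕ v^n·C for some n ≥ 0 (i.e., every element of Cend_{N,Q} is uniquely a sum Σ_{i=0}^n v^i c_i with c_i ∈ C), with det Q ≠ 0. Then n = 0, i.e., C = Cend_{N,Q}. -/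
open Polynomial

noncomputable section

set_option synthInstance.maxHeartbeats 1000000
set_option maxHeartbeats 1000000

variable (k : Type*) [Field k] [CharZero k]

/-- Entries of `Cend_N = M_N(k[D,v])`: polynomials in `D` (outer variable)
with coefficients in `k[v]` (inner variable). -/
abbrev EE (k : Type*) [Field k] := Polynomial (Polynomial k)

/-- `Cend_N` as `N×N` matrices over `k[D,v]`. -/
abbrev CM (k : Type*) [Field k] (N : ℕ) := Matrix (Fin N) (Fin N) (EE k)

/-- Polynomials in `λ` (outer) over `k[D,v]`, used to encode the
`λ`-product of `Cend_N`. -/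
abbrev LL (k : Type*) [Field k] := Polynomial (EE k)

/-- Substitution `D ↦ -λ`, `v ↦ v` (applied to the left factor). -/
def phiA : EE k →+* LL k :=
  Polynomial.eval₂RingHom
    ((Polynomial.C : EE k →+* LL k).comp (Polynomial.C : Polynomial k →+* EE k))
    (-(Polynomial.X : LL k))

/-- Substitution `v ↦ v + λ` on `k[v]`. -/
def gB : Polynomial k →+* LL k :=
  Polynomial.eval₂RingHom
    (((Polynomial.C : EE k →+* LL k).comp (Polynomial.C : Polynomial k →+* EE k)).comp
      (Polynomial.C : k →+* Polynomial k))
    (Polynomial.C (Polynomial.C (Polynomial.X : Polynomial k)) + (Polynomial.X : LL k))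

/-- Substitution `D ↦ D + λ`, `v ↦ v + λ` (applied to the right factor). -/
def phiB : EE k →+* LL k :=
  Polynomial.eval₂RingHom (gB k) (Polynomial.C (Polynomial.X : EE k) + (Polynomial.X : LL k))

/-- The `n`-th conformal product on `Cend_N = H ⊗ M_N(k[v])`, determined by
`A(v) ∘_n B(v) = A(v)·∂_v^n(B(v))` and the sesquilinearity axioms; it is
extracted as `n!` times the `λ^n`-coefficient of `a(-λ,v)·b(D+λ,v+λ)`. -/
def nmul (N : ℕ) (n : ℕ) (a b : CM k N) : CM k N :=
  ((a.map (phiA k)) * (b.map (phiB k))).map fun e => Nat.factorial n • e.coeff n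

/-- The action of `D` on `Cend_N` (multiplication by `D`). -/
def Dmul (N : ℕ) (a : CM k N) : CM k N := a.map fun e => (Polynomial.X : EE k) * e

/-- `C ⊆ Cend_N` is a conformal subalgebra: a `k[D]`-submodule closed under
all the `n`-products. -/
def IsConfSubalgebra (N : ℕ) (C : Submodule k (CM k N)) : Prop :=
  (∀ a ∈ C, Dmul k N a ∈ C) ∧ ∀ a ∈ C, ∀ b ∈ C, ∀ n : ℕ, nmul k N n a b ∈ C

/-- `φ^{-1}(Q) = Σ_s (-D)^{(s)} ⊗ ∂_v^s(Q)`. -/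
def phiInv (N : ℕ) (B : Matrix (Fin N) (Fin N) (Polynomial k)) : CM k N :=
  B.map fun b => ∑ s ∈ Finset.range (b.natDegree + 1),
    ((-1 : k) ^ s * ((Nat.factorial s : k))⁻¹) •
      ((Polynomial.X : EE k) ^ s * Polynomial.C (derivative^[s] b))

/-- The element `v ∈ k[D,v]`. -/
def vE : EE k := Polynomial.C (Polynomial.X : Polynomial k)

set_option linter.all false

theorem cancelR {R : Type*} [CommRing R] [IsDomain R] {N : ℕ} {M M' B : Matrix (Fin N) (Fin N) R}
    (hB : B.det ≠ 0) (h : M * B = M' * B) : M = M' := by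
  have h2 : B.det • M = B.det • M' := by
    have := congrArg (· * B.adjugate) h
    simpa [Matrix.mul_assoc, Matrix.mul_adjugate] using this
  ext i j
  have := congrFun (congrFun h2 i) j
  simpa [hB] using this

theorem cancelL {R : Type*} [CommRing R] [IsDomain R] {N : ℕ} {M M' B : Matrix (Fin N) (Fin N) R}
    (hB : B.det ≠ 0) (h : B * M = B * M') : M = M' := by
  have h2 : B.det • M = B.det • M' := by
    have := congrArg (B.adjugate * ·) h
    simpa [← Matrix.mul_assoc, Matrix.adjugate_mul] using this
  ext i j
  have := congrFun (congrFun h2 i) j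
  simpa [hB] using this

theorem phiB_eval (e : EE k) : (phiB k e).eval 0 = e := by
  have : ((Polynomial.evalRingHom (0 : EE k)).comp (phiB k)) = RingHom.id _ := by
    apply Polynomial.ringHom_ext'
    · apply Polynomial.ringHom_ext' <;> simp [phiB, gB]
      ext; simp
    · simp [phiB]
  exact congrArg (fun f => f e) this

theorem phiA_inj : Function.Injective (phiA k) := by
  let g : LL k →+* EE k := Polynomial.eval₂RingHom
    ((Polynomial.C).comp (Polynomial.evalRingHom (0 : Polynomial k))) (-Polynomial.X)
  have : g.comp (phiA k) = RingHom.id _ := by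
    apply Polynomial.ringHom_ext'
    · apply Polynomial.ringHom_ext' <;> simp [phiA, g]
      ext; simp
    · simp [phiA, g]
  exact Function.LeftInverse.injective (g := g) (fun e => congrArg (fun f => f e) this)

theorem phiB_inj : Function.Injective (phiB k) :=
  fun a b h => by rw [← phiB_eval k a, h, phiB_eval k b]

theorem phiInv_det (N : ℕ) (Q : Matrix (Fin N) (Fin N) (Polynomial k)) (hdet : Q.det ≠ 0) :
    (phiInv k N Q).det ≠ 0 := by
  intro h
  apply hdet
  have h1 : (phiInv k N Q).map (Polynomial.evalRingHom (0 : Polynomial k)) = Q := by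
    ext1 i j
    simp only [phiInv, Matrix.map_apply, Polynomial.coe_evalRingHom, Polynomial.eval_finsetSum]
    rw [Finset.sum_eq_single 0]
    · simp
    · intro b _ hb
      simp [hb]
    · simp
  rw [← h1]
  have := RingHom.map_det (Polynomial.evalRingHom (0 : Polynomial k)) (phiInv k N Q)
  rw [RingHom.mapMatrix_apply] at this
  rw [← this, h, map_zero]

theorem map_det_ne {R S : Type*} [CommRing R] [CommRing S] {N : ℕ} (f : R →+* S)
    (hf : Function.Injective f) (M : Matrix (Fin N) (Fin N) R) (h : M.det ≠ 0) :
    (M.map f).det ≠ 0 := by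
  have := RingHom.map_det f M
  rw [RingHom.mapMatrix_apply] at this
  rw [← this]
  exact (map_ne_zero_iff f hf).2 h

theorem scalar_const (σ : EE k) (h : phiA k σ = phiB k σ) :
    ∃ α : k, σ = Polynomial.C (Polynomial.C α) := by
  have h0 : ∀ e : EE k, (phiA k e).eval 0 = Polynomial.C (e.eval 0) := by
    intro e
    have : ((Polynomial.evalRingHom (0 : EE k)).comp (phiA k)) =
        (Polynomial.C).comp (Polynomial.evalRingHom (0 : Polynomial k)) := by
      apply Polynomial.ringHom_ext'
      · apply Polynomial.ringHom_ext' <;> simp [phiA]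
        ext; simp
      · simp [phiA]
    exact congrArg (fun f => f e) this
  have h1 : Polynomial.C (σ.eval 0) = σ := by rw [← h0, h, phiB_eval]
  generalize σ.eval 0 = p at h1
  subst h1
  -- substitute v = 0, D = 0, λ = X
  let g : LL k →+* Polynomial k := Polynomial.eval₂RingHom
    (((Polynomial.C).comp (Polynomial.evalRingHom (0 : k))).comp
      (Polynomial.evalRingHom (0 : Polynomial k))) Polynomial.X
  have hA : g (phiA k (Polynomial.C p)) = Polynomial.C (p.eval 0) := by
    simp [g, phiA]
  have hB : (g.comp ((phiB k).comp Polynomial.C)) = RingHom.id _ := by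
    apply Polynomial.ringHom_ext' <;> simp [phiB, gB, g]
    ext; simp
  have hB' : g (phiB k (Polynomial.C p)) = p := congrArg (fun f => f p) hB
  refine ⟨p.eval 0, ?_⟩
  rw [← hA, h, hB']

/-- the λ-product -/
def Lp (N : ℕ) (a b : CM k N) : Matrix (Fin N) (Fin N) (LL k) :=
  a.map (phiA k) * b.map (phiB k)

theorem map_mul' {R S : Type*} [CommRing R] [CommRing S] {N : ℕ} (f : R →+* S)
    (A B : Matrix (Fin N) (Fin N) R) : (A * B).map f = A.map f * B.map f :=
  Matrix.map_mul

theorem centroid_gen {E S : Type*} [CommRing E] [CommRing S] [IsDomain S] (N : ℕ)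
    (fA fB : E →+* S) (hfA : Function.Injective fA) (hfB : Function.Injective fB)
    (lp : Matrix (Fin N) (Fin N) E → Matrix (Fin N) (Fin N) E → Matrix (Fin N) (Fin N) S)
    (hlp : ∀ a b, lp a b = a.map fA * b.map fB)
    (P : Matrix (Fin N) (Fin N) E) (hP : P.det ≠ 0)
    (R : Matrix (Fin N) (Fin N) E → Matrix (Fin N) (Fin N) E → Prop)
    (hR : ∀ x x' y y', R x x' → R y y' → lp x' y = lp x y')
    (hE : ∀ X, ∃ X', R (X * P) (X' * P)) :
    ∃ σ : E, fA σ = fB σ ∧ ∀ X x', R (X * P) x' → x' = σ • (X * P) := by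
  obtain ⟨s, hs⟩ := hE 1
  have hA := map_det_ne fA hfA P hP
  have hB := map_det_ne fB hfB P hP
  have key : ∀ X X' Y Y', R (X * P) (X' * P) → R (Y * P) (Y' * P) →
      X'.map fA * P.map fA * Y.map fB =
      X.map fA * P.map fA * Y'.map fB := by
    intro X X' Y Y' h1 h2
    have := hR _ _ _ _ h1 h2
    simp only [hlp, map_mul', ← Matrix.mul_assoc] at this
    exact cancelR hB this
  have one1 : (1 : Matrix (Fin N) (Fin N) E).map fA = 1 := by simp
  have one2 : (1 : Matrix (Fin N) (Fin N) E).map fB = 1 := by simp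
  have k0 := key _ _ _ _ hs hs
  rw [one1, one2, Matrix.one_mul, Matrix.mul_one] at k0
  have kY : ∀ Y Y', R (Y * P) (Y' * P) → Y' = s * Y := by
    intro Y Y' h
    have := key _ _ _ _ hs h
    rw [k0, one1, Matrix.one_mul, Matrix.mul_assoc, ← map_mul'] at this
    exact (Matrix.map_injective hfB (cancelL hA this)).symm
  have comm : ∀ X, s * X = X * s := by
    intro X
    obtain ⟨X', hX⟩ := hE X
    have h1 := key _ _ _ _ hX hs
    rw [one2, Matrix.mul_one, Matrix.mul_assoc, ← k0, ← Matrix.mul_assoc] at h1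
    have h2 := cancelR hA h1
    rw [← map_mul'] at h2
    rw [← kY X X' hX]
    exact Matrix.map_injective hfA h2
  have hsc : ∃ σ : E, fA σ = fB σ ∧ s = σ • (1 : Matrix (Fin N) (Fin N) E) := by
    have : s ∈ Set.range (Matrix.scalar (Fin N)) := by
      rw [Matrix.mem_range_scalar_iff_commute_single']
      intro i j
      exact (comm _).symm
    obtain ⟨σ, hσ⟩ := this
    rcases Nat.eq_zero_or_pos N with h0 | h0
    · subst h0
      exact ⟨0, by simp, Subsingleton.elim _ _⟩
    have e1 : s = σ • (1 : Matrix (Fin N) (Fin N) E) := by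
      rw [← hσ]; simp [Matrix.smul_one_eq_diagonal]
    have e2 : ∀ f : E →+* S, s.map f = f σ • (1 : Matrix (Fin N) (Fin N) (S)) := by
      intro f
      rw [e1]
      ext1 i j
      by_cases h : i = j <;> simp [Matrix.one_apply, h]
    rw [e2, e2, Matrix.smul_mul, Matrix.mul_smul, Matrix.one_mul, Matrix.mul_one] at k0
    have : fA σ = fB σ := by
      have h3 : ((fA σ) • (1 : Matrix (Fin N) (Fin N) (S))) = (fB σ) • 1 := by
        apply cancelR hA
        simpa using k0
      have := congrFun (congrFun h3 ⟨0, h0⟩) ⟨0, h0⟩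
      simpa using this
    exact ⟨σ, this, e1⟩
  obtain ⟨σ, hσ, hα⟩ := hsc
  refine ⟨σ, hσ, fun X x' h => ?_⟩
  have h1 := hR _ _ _ _ hs h
  have h2 : lp (1 * P) x' = lp (1 * P) (s * X * P) := by
    rw [← h1]
    simp only [hlp, map_mul', one1, Matrix.one_mul]
    rw [k0]; simp only [Matrix.mul_assoc]
  simp only [hlp, Matrix.one_mul] at h2
  have h3 := Matrix.map_injective hfB (cancelL hA h2)
  rw [h3, hα]; simp

theorem centroid (N : ℕ) (P : CM k N) (hP : P.det ≠ 0) (R : CM k N → CM k N → Prop)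
    (hR : ∀ x x' y y', R x x' → R y y' → Lp k N x' y = Lp k N x y')
    (hE : ∀ X, ∃ X', R (X * P) (X' * P)) :
    ∃ α : k, ∀ X x', R (X * P) x' →
      x' = (Polynomial.C (Polynomial.C α) : EE k) • (X * P) := by
  obtain ⟨σ, h1, h2⟩ := @centroid_gen (EE k) (LL k) _ _ _ N (phiA k) (phiB k) (phiA_inj k)
    (phiB_inj k) (Lp k N) (fun _ _ => by unfold Lp; rfl) P hP R hR hE
  obtain ⟨α, rfl⟩ := scalar_const k σ h1
  exact ⟨α, h2⟩

/-- v in LL -/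
def vL : LL k := Polynomial.C (vE k)

theorem map_smul_g {R S : Type*} [CommRing R] [CommRing S] {N : ℕ} (f : R →+* S) (r : R)
    (A : Matrix (Fin N) (Fin N) R) : (r • A).map f = f r • A.map f := by
  ext1; simp

theorem mul_smul_g {R : Type*} [CommRing R] {N : ℕ} (r : R)
    (A B : Matrix (Fin N) (Fin N) R) : A * (r • B) = r • (A * B) := by simp

theorem smul_mul_g {R : Type*} [CommRing R] {N : ℕ} (r : R)
    (A B : Matrix (Fin N) (Fin N) R) : (r • A) * B = r • (A * B) := by simp

theorem c_smul (N : ℕ) (α : k) (a : CM k N) :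
    α • a = (Polynomial.C (Polynomial.C α) : EE k) • a := by
  ext1 r c
  rw [Matrix.smul_apply, Matrix.smul_apply, smul_eq_mul, ← Polynomial.smul_eq_C_mul]
  ext1
  rw [Polynomial.coeff_smul, Polynomial.coeff_smul, smul_eq_mul, ← Polynomial.smul_eq_C_mul]

theorem phiA_v : phiA k (vE k) = vL k := by simp [phiA, vE, vL]

theorem phiB_v : phiB k (vE k) = vL k + Polynomial.X := by simp [phiB, vE, vL, gB]

/-- constants in LL -/
def cL (α : k) : LL k := Polynomial.C (Polynomial.C (Polynomial.C α))

theorem phiA_c (α : k) : phiA k (Polynomial.C (Polynomial.C α)) = cL k α := by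
  simp [phiA, cL]

theorem phiB_c (α : k) : phiB k (Polynomial.C (Polynomial.C α)) = cL k α := by
  simp [phiB, gB, cL]

theorem Lp_smul_left (N : ℕ) (e : EE k) (a b : CM k N) :
    Lp k N (e • a) b = phiA k e • Lp k N a b := by
  have := @map_smul_g (EE k) (LL k) _ _ N (phiA k) e a
  rw [Lp, this]
  exact smul_mul_g _ _ _

theorem Lp_smul_right (N : ℕ) (e : EE k) (a b : CM k N) :
    Lp k N a (e • b) = phiB k e • Lp k N a b := by
  have := @map_smul_g (EE k) (LL k) _ _ N (phiB k) e b
  rw [Lp, this]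
  exact mul_smul_g _ _ _

theorem Lp_v_left (N : ℕ) (i : ℕ) (a b : CM k N) :
    Lp k N (vE k ^ i • a) b = vL k ^ i • Lp k N a b := by
  rw [Lp_smul_left, map_pow, phiA_v]

theorem Lp_v_right (N : ℕ) (i : ℕ) (a b : CM k N) :
    Lp k N a (vE k ^ i • b) = (vL k + Polynomial.X) ^ i • Lp k N a b := by
  rw [Lp_smul_right, map_pow, phiB_v]

theorem Lp_sum_left (N : ℕ) {ι : Type*} (s : Finset ι) (a : ι → CM k N) (b : CM k N) :
    Lp k N (∑ i ∈ s, a i) b = ∑ i ∈ s, Lp k N (a i) b := by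
  have : (∑ i ∈ s, a i).map (phiA k) = ∑ i ∈ s, (a i).map (phiA k) :=
    map_sum (phiA k).mapMatrix a s
  simp only [Lp, this, Finset.sum_mul]

theorem Lp_sum_right (N : ℕ) {ι : Type*} (s : Finset ι) (a : CM k N) (b : ι → CM k N) :
    Lp k N a (∑ i ∈ s, b i) = ∑ i ∈ s, Lp k N a (b i) := by
  have : (∑ i ∈ s, b i).map (phiB k) = ∑ i ∈ s, (b i).map (phiB k) :=
    map_sum (phiB k).mapMatrix b s
  simp only [Lp, this, Finset.mul_sum]

theorem Lp_sub_left (N : ℕ) (a a' b : CM k N) :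
    Lp k N (a - a') b = Lp k N a b - Lp k N a' b := by
  have : (a - a').map (phiA k) = a.map (phiA k) - a'.map (phiA k) :=
    map_sub (phiA k).mapMatrix a a'
  rw [Lp, this]
  exact sub_mul (a.map (phiA k)) (a'.map (phiA k)) (b.map (phiB k))

theorem Lp_sub_right (N : ℕ) (a b b' : CM k N) :
    Lp k N a (b - b') = Lp k N a b - Lp k N a b' := by
  have : (b - b').map (phiB k) = b.map (phiB k) - b'.map (phiB k) :=
    map_sub (phiB k).mapMatrix b b'
  rw [Lp, this]
  exact mul_sub (a.map (phiA k)) (b.map (phiB k)) (b'.map (phiB k))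

theorem Lp_c_left (N : ℕ) (α : k) (a b : CM k N) :
    Lp k N (α • a) b = cL k α • Lp k N a b := by
  rw [c_smul, Lp_smul_left, phiA_c]

theorem Lp_c_right (N : ℕ) (α : k) (a b : CM k N) :
    Lp k N a (α • b) = cL k α • Lp k N a b := by
  rw [c_smul, Lp_smul_right, phiB_c]

/-- coefficientwise membership -/
def CL (N : ℕ) (C : Submodule k (CM k N)) : AddSubgroup (Matrix (Fin N) (Fin N) (LL k)) where
  carrier := {M | ∀ m : ℕ, (M.map fun e => e.coeff m) ∈ C}
  zero_mem' := fun m => by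
    have : ((0 : Matrix (Fin N) (Fin N) (LL k)).map fun e => e.coeff m) = 0 := by ext1; simp
    rw [this]; exact C.zero_mem
  add_mem' := fun {a b} ha hb m => by
    have : ((a + b).map fun e => e.coeff m) =
      (a.map fun e => e.coeff m) + (b.map fun e => e.coeff m) := by ext1; simp
    rw [this]; exact C.add_mem (ha m) (hb m)
  neg_mem' := fun {a} ha m => by
    have : ((-a).map fun e => e.coeff m) = -(a.map fun e => e.coeff m) := by ext1; simp
    rw [this]; exact C.neg_mem (ha m)

theorem CL_X (N : ℕ) (C : Submodule k (CM k N)) (i : ℕ) (M) (h : M ∈ CL k N C) :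
    ((Polynomial.X : LL k) ^ i • M) ∈ CL k N C := by
  induction i with
  | zero => simpa using h
  | succ i ih =>
    rw [pow_succ', mul_smul]
    intro m
    cases m with
    | zero =>
      convert C.zero_mem using 1
      ext1; simp
    | succ m =>
      convert ih m using 1
      ext1 r c
      simp only [Matrix.map_apply, Matrix.smul_apply, smul_eq_mul, Polynomial.coeff_X_mul]

theorem CL_Lp (N : ℕ) (C : Submodule k (CM k N)) (hC : IsConfSubalgebra k N C) (a b)
    (ha : a ∈ C) (hb : b ∈ C) : Lp k N a b ∈ CL k N C := by
  intro m
  have h := C.smul_mem ((m.factorial : k)⁻¹) (hC.2 a ha b hb m)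
  convert h using 1
  ext1 r c
  have hm : (m.factorial : k) ≠ 0 := by exact_mod_cast m.factorial_ne_zero
  simp only [Matrix.map_apply, Matrix.smul_apply, nmul, Lp]
  rw [← Nat.cast_smul_eq_nsmul k, smul_smul, inv_mul_cancel₀ hm, one_smul]

theorem CL_uniq (N : ℕ) (C : Submodule k (CM k N)) (n : ℕ)
    (huniq : ∀ c : Fin (n + 1) → CM k N, (∀ i, c i ∈ C) →
      ∑ i : Fin (n + 1), vE k ^ (i : ℕ) • c i = 0 → ∀ i, c i = 0)
    (M : Fin (n + 1) → Matrix (Fin N) (Fin N) (LL k)) (hM : ∀ i, M i ∈ CL k N C)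
    (h : ∑ i : Fin (n + 1), vL k ^ (i : ℕ) • M i = 0) : ∀ i, M i = 0 := by
  intro i
  have : ∀ m, ((M i).map fun e => e.coeff m) = 0 := by
    intro m
    refine huniq (fun i => (M i).map fun e => e.coeff m) (fun i => hM i m) ?_ i
    ext1 r c
    have h1 := congrArg (fun e => Polynomial.coeff e m) (congrFun (congrFun h r) c)
    simp only [Matrix.sum_apply, Matrix.smul_apply, Polynomial.finsetSum_coeff, smul_eq_mul, vL,
      ← Polynomial.C_pow, Polynomial.coeff_C_mul] at h1
    simpa [Matrix.sum_apply] using h1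
  ext1 r c
  ext1 m
  exact congrFun (congrFun (this m) r) c

theorem top_coeff_gen {S W : Type*} [CommRing S] [AddCommGroup W] [Module S W] (n : ℕ)
    (G : AddSubgroup W) (v l : S) (hl : ∀ (i : ℕ), ∀ M ∈ G, l ^ i • M ∈ G)
    (hu : ∀ M : Fin (n + 1) → W, (∀ i, M i ∈ G) →
      ∑ i : Fin (n + 1), v ^ (i : ℕ) • M i = 0 → ∀ i, M i = 0)
    (P : W) (A R : Fin (n + 1) → W)
    (hP : P ∈ G) (hA : ∀ i, A i ∈ G) (hR : ∀ i, R i ∈ G)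
    (h1 : v ^ (n + 1) • P = ∑ i : Fin (n + 1), v ^ (i : ℕ) • A i)
    (h2 : (v + l) ^ (n + 1) • P = ∑ i : Fin (n + 1), (v + l) ^ (i : ℕ) • R i) :
    A (Fin.last n) + (n + 1) • (l • P) = R (Fin.last n) := by
  let M : Fin (n + 1) → W := fun j =>
    A j + ((n + 1).choose j) • (l ^ (n + 1 - (j : ℕ)) • P)
      - ∑ i : Fin (n + 1), ((i : ℕ).choose j) • (l ^ ((i : ℕ) - (j : ℕ)) • R i)
  have hM : ∀ j, M j ∈ G := by
    intro j
    refine AddSubgroup.sub_mem _ (AddSubgroup.add_mem _ (hA j)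
      (AddSubgroup.nsmul_mem _ (hl _ _ hP) _)) (AddSubgroup.sum_mem G fun i _ =>
        AddSubgroup.nsmul_mem _ (hl _ _ (hR i)) _)
  have exp : ∀ i : ℕ, i ≤ n → ∀ Z : W,
      (v + l) ^ i • Z = ∑ j : Fin (n + 1), v ^ (j : ℕ) •
        ((i.choose j) • (l ^ (i - (j : ℕ)) • Z)) := by
    intro i hi Z
    rw [Fin.sum_univ_eq_sum_range (fun j => v ^ j •
        ((i.choose j) • (l ^ (i - j) • Z))) (n + 1), add_pow, Finset.sum_smul]
    rw [← Finset.sum_subset (Finset.range_mono (Nat.succ_le_succ hi))]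
    · apply Finset.sum_congr rfl
      intro j _
      rw [← Nat.cast_smul_eq_nsmul S, smul_smul, smul_smul]
      congr 1; ring
    · intro j _ hj
      rw [Nat.choose_eq_zero_of_lt (by simpa using hj)]
      simp
  have exp2 : (v + l) ^ (n + 1) • P = v ^ (n + 1) • P +
      ∑ j : Fin (n + 1), v ^ (j : ℕ) •
        (((n + 1).choose j) • (l ^ (n + 1 - (j : ℕ)) • P)) := by
    rw [Fin.sum_univ_eq_sum_range (fun j => v ^ j •
        (((n + 1).choose j) • (l ^ (n + 1 - j) • P))) (n + 1), add_pow,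
        Finset.sum_smul, Finset.sum_range_succ, add_comm]
    congr 1
    · simp
    · apply Finset.sum_congr rfl
      intro j _
      rw [← Nat.cast_smul_eq_nsmul S, smul_smul, smul_smul]
      congr 1; ring
  have hz : ∑ j : Fin (n + 1), v ^ (j : ℕ) • M j = 0 := by
    simp only [M, smul_sub, smul_add, Finset.sum_sub_distrib, Finset.sum_add_distrib]
    rw [← h1, ← exp2, h2, sub_eq_zero]
    simp only [Finset.smul_sum]
    rw [Finset.sum_comm]
    exact Finset.sum_congr rfl fun i _ => exp i (Nat.lt_succ_iff.1 i.2) (R i)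
  have := hu M hM hz (Fin.last n)
  simp only [M, Fin.val_last] at this
  rw [Finset.sum_eq_single (Fin.last n)] at this
  · simpa [sub_eq_zero] using this
  · intro i _ hi
    rw [Nat.choose_eq_zero_of_lt (by simpa using Fin.val_lt_last hi)]
    simp
  · simp

/-- Theorem 5.4.1: if a conformal subalgebra `C` of `Cend_N` satisfies
`Cend_{N,Q} = C ⊕ v·C ⊕ ⋯ ⊕ v^n·C` (with `det Q ≠ 0`), then `n = 0`,
i.e. `C = Cend_{N,Q}`. -/
theorem direct_sum_with_v_trivial [IsAlgClosed k] (N : ℕ) (hN : 0 < N)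
    (C : Submodule k (CM k N)) (hC : IsConfSubalgebra k N C)
    (Q : Matrix (Fin N) (Fin N) (Polynomial k)) (hdet : Q.det ≠ 0)
    (n : ℕ)
    (hex : ∀ y : CM k N,
      (∃ x : CM k N, y = x * phiInv k N Q) ↔
      (∃ c : Fin (n + 1) → CM k N, (∀ i, c i ∈ C) ∧
        y = ∑ i : Fin (n + 1), vE k ^ (i : ℕ) • c i))
    (huniq : ∀ c : Fin (n + 1) → CM k N, (∀ i, c i ∈ C) →
      ∑ i : Fin (n + 1), vE k ^ (i : ℕ) • c i = 0 → ∀ i, c i = 0) :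
    n = 0 := by
  by_contra hn
  have hCE : ∀ c ∈ C, ∃ x : CM k N, c = x * phiInv k N Q := by
    intro c hc
    rw [hex]
    refine ⟨fun i => if i = 0 then c else 0, fun i => ?_, ?_⟩
    · dsimp only
      split_ifs
      · exact hc
      · exact C.zero_mem
    · rw [Finset.sum_eq_single 0]
      · simp
      · intro i _ hi; simp [hi]
      · simp
  have hf : ∀ c : CM k N, ∃ f : Fin (n + 1) → CM k N, c ∈ C → ((∀ i, f i ∈ C) ∧
      vE k ^ (n + 1) • c = ∑ i : Fin (n + 1), vE k ^ (i : ℕ) • f i) := by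
    intro c
    by_cases hc : c ∈ C
    · obtain ⟨x, hx⟩ := hCE c hc
      obtain ⟨f, h1, h2⟩ := (hex (vE k ^ (n + 1) • c)).1
        ⟨vE k ^ (n + 1) • x, by rw [Matrix.smul_mul, ← hx]⟩
      exact ⟨f, fun _ => ⟨h1, h2⟩⟩
    · exact ⟨0, fun h => absurd h hc⟩
  choose f hf using hf
  have top : ∀ a ∈ C, ∀ b ∈ C, Lp k N (f a (Fin.last n)) b +
      (n + 1) • ((Polynomial.X : LL k) • Lp k N a b) = Lp k N a (f b (Fin.last n)) := by
    intro a ha b hb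
    refine top_coeff_gen n (CL k N C) (vL k) Polynomial.X (CL_X k N C)
      (CL_uniq k N C n huniq) (Lp k N a b) (fun i => Lp k N (f a i) b)
      (fun i => Lp k N a (f b i)) (CL_Lp k N C hC a b ha hb)
      (fun i => CL_Lp k N C hC _ _ ((hf a ha).1 i) hb)
      (fun i => CL_Lp k N C hC _ _ ha ((hf b hb).1 i)) ?_ ?_
    · rw [← Lp_v_left, (hf a ha).2, Lp_sum_left]
      simp only [Lp_v_left]
    · rw [← Lp_v_right, (hf b hb).2, Lp_sum_right]
      simp only [Lp_v_right]
  have hn1 : ((n : k) + 1) ≠ 0 := by exact_mod_cast n.succ_ne_zero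
  let t : CM k N → CM k N := fun a => ((n : k) + 1)⁻¹ • f a (Fin.last n)
  have ht : ∀ a ∈ C, t a ∈ C := fun a ha => C.smul_mem _ ((hf a ha).1 _)
  let s : CM k N → CM k N := fun a => vE k ^ 1 • a - t a
  have hs : ∀ a ∈ C, ∀ b ∈ C, Lp k N (s a) b = Lp k N a (s b) := by
    intro a ha b hb
    simp only [s, t, Lp_sub_left, Lp_sub_right, Lp_v_left, Lp_v_right, Lp_c_left, Lp_c_right]
    rw [← top a ha b hb, smul_add, ← Nat.cast_smul_eq_nsmul (LL k), smul_smul]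
    have : cL k ((n : k) + 1)⁻¹ * ((n + 1 : ℕ) : LL k) = 1 := by
      have h1 : ((n + 1 : ℕ) : LL k) = cL k ((n : k) + 1) := by simp [cL]
      rw [h1]
      simp only [cL, ← Polynomial.C_mul]
      rw [inv_mul_cancel₀ hn1]; simp
    rw [this, one_smul, pow_one, pow_one, add_smul]
    abel
  let R : CM k N → CM k N → Prop := fun x x' => ∃ c : Fin (n + 1) → CM k N, (∀ i, c i ∈ C) ∧
    x = ∑ i : Fin (n + 1), vE k ^ (i : ℕ) • c i ∧
    x' = ∑ i : Fin (n + 1), vE k ^ (i : ℕ) • s (c i)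
  have hsE : ∀ a ∈ C, ∃ x : CM k N, s a = x * phiInv k N Q := by
    intro a ha
    obtain ⟨x, hx⟩ := hCE a ha
    obtain ⟨y, hy⟩ := hCE _ (ht a ha)
    refine ⟨vE k ^ 1 • x - y, ?_⟩
    simp only [s]
    rw [sub_mul, Matrix.smul_mul, ← hx, ← hy]
  obtain ⟨α, hα⟩ := centroid k N (phiInv k N Q) (phiInv_det k N Q hdet) R (by
      rintro x x' y y' ⟨c, hc, rfl, rfl⟩ ⟨d, hd, rfl, rfl⟩
      simp only [Lp_sum_left, Lp_sum_right, Lp_v_left, Lp_v_right]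
      refine Finset.sum_congr rfl fun i _ => congrArg _ (Finset.sum_congr rfl fun j _ => ?_)
      rw [hs _ (hc _) _ (hd _)]) (by
      intro X
      obtain ⟨c, hc, h⟩ := (hex (X * phiInv k N Q)).1 ⟨X, rfl⟩
      choose g hg using fun i => hsE (c i) (hc i)
      refine ⟨∑ i : Fin (n + 1), vE k ^ (i : ℕ) • g i, c, hc, h, ?_⟩
      rw [Finset.sum_mul]
      refine Finset.sum_congr rfl fun i _ => ?_
      rw [hg, Matrix.smul_mul])
  have hC0 : ∀ c ∈ C, c = 0 := by
    intro c hc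
    obtain ⟨x, hx⟩ := hCE c hc
    have h1 : R (x * phiInv k N Q) (s c) := by
      refine ⟨fun i => if i = 0 then c else 0, fun i => ?_, ?_, ?_⟩
      · dsimp only
        split_ifs
        · exact hc
        · exact C.zero_mem
      · rw [Finset.sum_eq_single 0]
        · simp [hx]
        · intro i _ hi; simp [hi]
        · simp
      · have hf0 : f 0 (Fin.last n) = 0 := by
          refine huniq (f 0) (hf 0 C.zero_mem).1 ?_ _
          rw [← (hf 0 C.zero_mem).2, smul_zero]
        have hs0 : s 0 = 0 := by
          simp only [s, t]
          rw [hf0, smul_zero, smul_zero, sub_zero]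
        rw [Finset.sum_eq_single 0]
        · simp
        · intro i _ hi; simp [hi, hs0]
        · simp
    have h2 := hα _ _ h1
    rw [← hx] at h2
    have h3 : (Polynomial.C (Polynomial.C α) : EE k) • c = α • c := by
      ext1 r c
      simp [Algebra.smul_def, Polynomial.algebraMap_apply]
    rw [h3] at h2
    have hone : (1 : ℕ) < n + 1 := by omega
    let d : Fin (n + 1) → CM k N := fun i =>
      if (i : ℕ) = 0 then -(t c) - α • c else if (i : ℕ) = 1 then c else 0
    have hd := huniq d (fun i => by
        dsimp only [d]
        split_ifs
        · exact C.sub_mem (C.neg_mem (ht c hc)) (C.smul_mem _ hc)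
        · exact hc
        · exact C.zero_mem) (by
        have hne : (0 : Fin (n + 1)) ≠ ⟨1, hone⟩ := by
          intro h; simpa using congrArg Fin.val h
        rw [Finset.sum_eq_add (0 : Fin (n + 1)) ⟨1, hone⟩ hne]
        · simp only [d, s] at h2 ⊢
          simp only [Fin.val_zero, if_true, pow_zero, one_smul, one_ne_zero, if_false]
          rw [← h2]; abel
        · rintro i - ⟨h0, h1⟩
          have : (i : ℕ) ≠ 0 := fun h => h0 (Fin.ext h)
          have : (i : ℕ) ≠ 1 := fun h => h1 (Fin.ext h)
          simp [d, *]
        · simp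
        · simp) ⟨1, hone⟩
    simpa [d] using hd
  have hP0 : phiInv k N Q = 0 := by
    obtain ⟨c, hc, h⟩ := (hex (phiInv k N Q)).1 ⟨1, by simp⟩
    rw [h]
    exact Finset.sum_eq_zero fun i _ => by rw [hC0 _ (hc i), smul_zero]
  apply phiInv_det k N Q hdet
  rw [hP0]
  have : Nonempty (Fin N) := ⟨⟨0, hN⟩⟩
  exact Matrix.det_zero

end
end
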